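/- Let K = C_{(11,2)}(4₁) be the (11,2)-cable of the figure-eight knot, with normalized colored Jones polynomial J_{K,n} defined via Habiro's formula and the cabling formula (with r = 11, s = 2). For every integer n ≥ 1, the function ℏ ↦ J_{K,n}(e^{ℏ}) (defined for small real ℏ ≠ 0 by the quotient J̃_{K,n}(e^{ℏ/4})/J̃_{U,n}(e^{ℏ/4}) and extended real-analytically across ℏ = 0) has Taylor expansion at ℏ = 0 equal to J_{K,n}(e^{ℏ}) = 1 + (11 − 11n²)ℏ² + (−88 + 88n²)ℏ³ + (11891/12 − 1137n² + (1753/12)n⁴)ℏ⁴ + (−12826 + (47036/3)n² − (8558/3)n⁴)ℏ⁵ + (69672971/360 − (991683/4)n² + (224545/4)n⁴ − (630551/360)n⁶)ℏ⁶ + O(ℏ⁷). In particular, the coefficient of ℏ and every ℏ-coefficient up to order 6 is a polynomial in n of degree at most the order of ℏ. -/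

import Mathlib

/-- Habiro's formula for the normalized colored Jones polynomial of the figure-eight knot:
`J_{4₁,m}(q) = Σ_{k=0}^{|m|−1} Π_{j=1}^{k} (q^m + q^{−m} − q^j − q^{−j})`. -/
noncomputable def J41 (q : ℝ) (m : ℤ) : ℝ :=
  ∑ k ∈ Finset.range m.natAbs, ∏ j ∈ Finset.Icc 1 k,
    (q ^ m + q ^ (-m) - q ^ (j : ℤ) - q ^ (-(j : ℤ)))

/-- The unnormalized colored Jones polynomial of the figure-eight knot (with `t⁴ = q`):
`J̃_{4₁,m}(t) = ((t^{2m} − t^{−2m})/(t² − t^{−2})) · J_{4₁,m}(t⁴)`. -/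
noncomputable def Jtilde41 (t : ℝ) (m : ℤ) : ℝ :=
  (t ^ (2 * m) - t ^ (-(2 * m))) / (t ^ (2 : ℤ) - t ^ (-2 : ℤ)) * J41 (t ^ (4 : ℤ)) m

/-- The 0-framed unknot normalization `J̃_{U,n}(t) = (t^{2n} − t^{−2n})/(t² − t^{−2})`. -/
noncomputable def JtildeU (t : ℝ) (n : ℤ) : ℝ :=
  (t ^ (2 * n) - t ^ (-(2 * n))) / (t ^ (2 : ℤ) - t ^ (-2 : ℤ))

/-- The cabling formula for the unnormalized colored Jones polynomial of the
`(r,s)`-cable of the figure-eight knot: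
`J̃_{K,n}(t) = t^{−rs(n²−1)} Σ_w t^{4rw(sw+1)} J̃_{4₁,2sw+1}(t)`, where `w` runs over
`{−(n−1)/2, −(n−1)/2 + 1, …, (n−1)/2}`.  Writing `u = 2w = 2j − (n−1)` for `j = 0, …, n−1`,
the exponent is `4rw(sw+1) = rsu² + 2ru` and the color is `2sw + 1 = su + 1`. -/
noncomputable def JtildeCable (r s : ℤ) (t : ℝ) (n : ℤ) : ℝ :=
  t ^ (-(r * s * (n ^ 2 - 1))) *
    ∑ j ∈ Finset.range n.toNat,
      t ^ (r * s * (2 * (j : ℤ) - (n - 1)) ^ 2 + 2 * r * (2 * (j : ℤ) - (n - 1))) *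
        Jtilde41 t (s * (2 * (j : ℤ) - (n - 1)) + 1)

/-- The normalized colored Jones polynomial of the `(r,s)`-cable of the figure-eight knot,
evaluated at `q = e^ℏ` (that is, `t = e^{ℏ/4}`):
`J_{K,n}(e^ℏ) = J̃_{K,n}(e^{ℏ/4}) / J̃_{U,n}(e^{ℏ/4})`. -/
noncomputable def JCable (r s : ℤ) (n : ℤ) (h : ℝ) : ℝ :=
  JtildeCable r s (Real.exp (h / 4)) n / JtildeU (Real.exp (h / 4)) n


open Filter Topology Asymptotics

/-- `f` agrees with an explicit degree-7 polynomial up to `O(h^8)`. -/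
def Ap (f : ℝ → ℝ) (a0 a1 a2 a3 a4 a5 a6 a7 : ℝ) : Prop :=
  (fun h : ℝ => f h - (a0 + a1 * h + a2 * h ^ 2 + a3 * h ^ 3 + a4 * h ^ 4 + a5 * h ^ 5
    + a6 * h ^ 6 + a7 * h ^ 7)) =O[𝓝 0] (fun h : ℝ => h ^ 8)

lemma cont_bigO {f : ℝ → ℝ} (hf : ContinuousAt f 0) : f =O[𝓝 0] (fun _ : ℝ => (1 : ℝ)) :=
  hf.isBigO_one ℝ

lemma bigO_mul_cont {f g : ℝ → ℝ} {k : ℕ} (hf : f =O[𝓝 0] (fun h : ℝ => h ^ k))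
    (hg : ContinuousAt g 0) : (fun h => f h * g h) =O[𝓝 0] (fun h : ℝ => h ^ k) := by
  simpa using hf.mul (cont_bigO hg)

lemma Ap.add {f g : ℝ → ℝ} {a0 a1 a2 a3 a4 a5 a6 a7 b0 b1 b2 b3 b4 b5 b6 b7 : ℝ}
    (hf : Ap f a0 a1 a2 a3 a4 a5 a6 a7) (hg : Ap g b0 b1 b2 b3 b4 b5 b6 b7) :
    Ap (fun h => f h + g h) (a0 + b0) (a1 + b1) (a2 + b2) (a3 + b3) (a4 + b4) (a5 + b5)
      (a6 + b6) (a7 + b7) := by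
  unfold Ap at *
  refine (IsBigO.add hf hg).congr_left fun h => ?_
  ring

lemma Ap.sub {f g : ℝ → ℝ} {a0 a1 a2 a3 a4 a5 a6 a7 b0 b1 b2 b3 b4 b5 b6 b7 : ℝ}
    (hf : Ap f a0 a1 a2 a3 a4 a5 a6 a7) (hg : Ap g b0 b1 b2 b3 b4 b5 b6 b7) :
    Ap (fun h => f h - g h) (a0 - b0) (a1 - b1) (a2 - b2) (a3 - b3) (a4 - b4) (a5 - b5)
      (a6 - b6) (a7 - b7) := by
  unfold Ap at *
  refine (IsBigO.sub hf hg).congr_left fun h => ?_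
  ring

lemma Ap.mul {f g : ℝ → ℝ} {a0 a1 a2 a3 a4 a5 a6 a7 b0 b1 b2 b3 b4 b5 b6 b7 : ℝ}
    (hf : Ap f a0 a1 a2 a3 a4 a5 a6 a7) (hg : Ap g b0 b1 b2 b3 b4 b5 b6 b7)
    (hc : ContinuousAt g 0) :
    Ap (fun h => f h * g h) (a0 * b0) (a0 * b1 + a1 * b0) (a0 * b2 + a1 * b1 + a2 * b0)
      (a0 * b3 + a1 * b2 + a2 * b1 + a3 * b0)
      (a0 * b4 + a1 * b3 + a2 * b2 + a3 * b1 + a4 * b0)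
      (a0 * b5 + a1 * b4 + a2 * b3 + a3 * b2 + a4 * b1 + a5 * b0)
      (a0 * b6 + a1 * b5 + a2 * b4 + a3 * b3 + a4 * b2 + a5 * b1 + a6 * b0)
      (a0 * b7 + a1 * b6 + a2 * b5 + a3 * b4 + a4 * b3 + a5 * b2 + a6 * b1 + a7 * b0) := by
  unfold Ap at *
  have h1 := bigO_mul_cont hf hc
  have h2 := bigO_mul_cont hg (g := fun h => a0 + a1 * h + a2 * h ^ 2 + a3 * h ^ 3 + a4 * h ^ 4
    + a5 * h ^ 5 + a6 * h ^ 6 + a7 * h ^ 7) (by fun_prop)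
  have h3 := bigO_mul_cont (isBigO_refl (fun h : ℝ => h ^ 8) (𝓝 0)) (g := fun h =>
    (a1 * b7 + a2 * b6 + a3 * b5 + a4 * b4 + a5 * b3 + a6 * b2 + a7 * b1)
    + (a2 * b7 + a3 * b6 + a4 * b5 + a5 * b4 + a6 * b3 + a7 * b2) * h
    + (a3 * b7 + a4 * b6 + a5 * b5 + a6 * b4 + a7 * b3) * h ^ 2
    + (a4 * b7 + a5 * b6 + a6 * b5 + a7 * b4) * h ^ 3
    + (a5 * b7 + a6 * b6 + a7 * b5) * h ^ 4
    + (a6 * b7 + a7 * b6) * h ^ 5 + a7 * b7 * h ^ 6) (by fun_prop)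
  refine ((h1.add h2).add h3).congr_left fun h => ?_
  ring

lemma Ap.poly (a0 a1 a2 a3 a4 a5 a6 a7 : ℝ) :
    Ap (fun h => a0 + a1 * h + a2 * h ^ 2 + a3 * h ^ 3 + a4 * h ^ 4 + a5 * h ^ 5
    + a6 * h ^ 6 + a7 * h ^ 7) a0 a1 a2 a3 a4 a5 a6 a7 := by
  unfold Ap
  simpa using isBigO_zero _ _

lemma Ap.exp (c : ℝ) :
    Ap (fun h => Real.exp (c * h)) 1 c (c ^ 2 / 2) (c ^ 3 / 6) (c ^ 4 / 24) (c ^ 5 / 120)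
      (c ^ 6 / 720) (c ^ 7 / 5040) := by
  unfold Ap
  have h0 := Real.exp_sub_sum_range_isBigO_pow 8
  have ht : Tendsto (fun h : ℝ => c * h) (𝓝 0) (𝓝 0) := by
    have : ContinuousAt (fun h : ℝ => c * h) 0 := by fun_prop
    simpa [ContinuousAt] using this
  have h1 := h0.comp_tendsto ht
  have h2 : ((fun x : ℝ => x ^ 8) ∘ fun h => c * h) =O[𝓝 0] (fun h : ℝ => h ^ 8) := by
    refine ((isBigO_refl (fun h : ℝ => h ^ 8) (𝓝 0)).const_mul_left (c ^ 8)).congr_left ?_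
    intro h
    simp [mul_pow]
  refine (h1.trans h2).congr_left fun h => ?_
  simp [Finset.sum_range_succ, Nat.factorial]
  ring

/-- the factor in Habiro's formula -/
noncomputable def fac (m : ℤ) (j : ℕ) (h : ℝ) : ℝ :=
  Real.exp (m * h) + Real.exp (-m * h) - Real.exp (j * h) - Real.exp (-j * h)

lemma fac_cont (m : ℤ) (j : ℕ) : ContinuousAt (fac m j) 0 := by
  unfold fac; fun_prop

lemma fac_analytic (m : ℤ) (j : ℕ) : AnalyticAt ℝ (fac m j) 0 := by
  unfold fac; fun_prop

lemma Ap.congr {f : ℝ → ℝ} {a0 a1 a2 a3 a4 a5 a6 a7 b0 b1 b2 b3 b4 b5 b6 b7 : ℝ}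
    (hf : Ap f a0 a1 a2 a3 a4 a5 a6 a7) (h0 : a0 = b0) (h1 : a1 = b1) (h2 : a2 = b2)
    (h3 : a3 = b3) (h4 : a4 = b4) (h5 : a5 = b5) (h6 : a6 = b6) (h7 : a7 = b7) :
    Ap f b0 b1 b2 b3 b4 b5 b6 b7 := by
  subst h0 h1 h2 h3 h4 h5 h6 h7; exact hf

lemma fac_ap (m : ℤ) (j : ℕ) : Ap (fac m j) 0 0 ((m : ℝ) ^ 2 - (j : ℝ) ^ 2) 0
    (((m : ℝ) ^ 4 - (j : ℝ) ^ 4) / 12) 0 (((m : ℝ) ^ 6 - (j : ℝ) ^ 6) / 360) 0 := by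
  have := (((Ap.exp m).add (Ap.exp (-m))).sub (Ap.exp j)).sub (Ap.exp (-j))
  refine Ap.congr this ?_ ?_ ?_ ?_ ?_ ?_ ?_ ?_ <;> ring

lemma fac_bigO (m : ℤ) (j : ℕ) : fac m j =O[𝓝 0] (fun h : ℝ => h ^ 2) := by
  have h1 := fac_ap m j
  unfold Ap at h1
  have h2 : (fun h : ℝ => h ^ 8) =O[𝓝 0] (fun h : ℝ => h ^ 2) := by
    refine (bigO_mul_cont (isBigO_refl (fun h : ℝ => h ^ 2) (𝓝 0))
      (g := fun h => h ^ 6) (by fun_prop)).congr_left fun h => by ring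
  have h3 := bigO_mul_cont (isBigO_refl (fun h : ℝ => h ^ 2) (𝓝 0))
    (g := fun h => ((m : ℝ) ^ 2 - (j : ℝ) ^ 2) + (((m : ℝ) ^ 4 - (j : ℝ) ^ 4) / 12) * h ^ 2
      + (((m : ℝ) ^ 6 - (j : ℝ) ^ 6) / 360) * h ^ 4) (by fun_prop)
  refine ((h1.trans h2).add h3).congr_left fun h => ?_
  ring

/-- the product in Habiro's formula -/
noncomputable def hprod (m : ℤ) (k : ℕ) (h : ℝ) : ℝ := ∏ j ∈ Finset.Icc 1 k, fac m j h

lemma hprod_succ (m : ℤ) (k : ℕ) (h : ℝ) :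
    hprod m (k + 1) h = hprod m k h * fac m (k + 1) h := by
  unfold hprod
  rw [Finset.prod_Icc_succ_top (by omega)]

lemma hprod_zero (m : ℤ) (h : ℝ) : hprod m 0 h = 1 := by simp [hprod]

lemma hprod_analytic (m : ℤ) (k : ℕ) : AnalyticAt ℝ (hprod m k) 0 := by
  induction k with
  | zero => 
    have : hprod m 0 = fun _ => 1 := funext (hprod_zero m)
    rw [this]; fun_prop
  | succ k ih =>
    have : hprod m (k + 1) = fun h => hprod m k h * fac m (k + 1) h := funext (hprod_succ m k)
    rw [this]; exact ih.mul (fac_analytic m (k + 1))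

lemma hprod_bigO (m : ℤ) (k : ℕ) : hprod m (4 + k) =O[𝓝 0] (fun h : ℝ => h ^ 8) := by
  induction k with
  | zero =>
    refine ((((fac_bigO m 1).mul (fac_bigO m 2)).mul (fac_bigO m 3)).mul
      (fac_bigO m 4)).congr ?_ ?_
    · intro h
      simp only [hprod_succ, hprod_zero, Nat.add_zero, zero_add, one_mul, Nat.reduceAdd]
    · intro h; ring
  | succ k ih =>
    refine (bigO_mul_cont ih (fac_cont m (4 + k + 1))).congr_left ?_
    intro h
    exact (hprod_succ m (4 + k) h).symm

/-- `J41` at `e^h` -/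
noncomputable def Jh (m : ℤ) (h : ℝ) : ℝ := ∑ k ∈ Finset.range m.natAbs, hprod m k h

lemma exp_zpow' (x : ℝ) (k : ℤ) : Real.exp x ^ k = Real.exp (k * x) := by
  rw [mul_comm, Real.exp_mul, Real.rpow_intCast]

lemma Jh_eq (m : ℤ) (h : ℝ) : J41 (Real.exp h) m = Jh m h := by
  unfold J41 Jh hprod fac
  simp only [exp_zpow']
  push_cast
  rfl

lemma Jh_analytic (m : ℤ) : AnalyticAt ℝ (Jh m) 0 := by
  unfold Jh
  exact Finset.analyticAt_fun_sum _ fun k _ => hprod_analytic m k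

lemma hprod_vanish (m : ℤ) (hm : m ≠ 0) (k : ℕ) (hk : m.natAbs ≤ k) (h : ℝ) :
    hprod m k h = 0 := by
  unfold hprod
  refine Finset.prod_eq_zero (i := m.natAbs) (by simp; omega) ?_
  unfold fac
  have : ((m.natAbs : ℕ) : ℝ) = |(m : ℝ)| := by
    rw [← Int.cast_abs, Int.abs_eq_natAbs]; simp
  rw [this]
  rcases abs_cases (m : ℝ) with ⟨h1, _⟩ | ⟨h1, _⟩ <;> rw [h1] <;> simp

lemma Jh_split (m : ℤ) (hm : m ≠ 0) (h : ℝ) :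
    Jh m h = (1 + fac m 1 h + fac m 1 h * fac m 2 h + fac m 1 h * fac m 2 h * fac m 3 h)
      + ∑ k ∈ Finset.range m.natAbs, hprod m (4 + k) h := by
  have h1 : Jh m h = ∑ k ∈ Finset.range (4 + m.natAbs), hprod m k h := by
    unfold Jh
    refine Finset.sum_subset (by simp) ?_
    intro k _ hk
    exact hprod_vanish m hm k (by simpa using hk) h
  rw [h1, Finset.sum_range_add]
  simp [Finset.sum_range_succ, hprod, Finset.prod_Icc_succ_top]

lemma Jh_ap (m : ℤ) (hm : m ≠ 0) : Ap (Jh m) 1 0 ((m : ℝ) ^ 2 - 1) 0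
    (((m : ℝ) ^ 4 - 1) / 12 + ((m : ℝ) ^ 2 - 1) * ((m : ℝ) ^ 2 - 4)) 0
    (((m : ℝ) ^ 6 - 1) / 360 + (((m : ℝ) ^ 2 - 1) * ((m : ℝ) ^ 4 - 16)
      + ((m : ℝ) ^ 4 - 1) * ((m : ℝ) ^ 2 - 4)) / 12
      + ((m : ℝ) ^ 2 - 1) * ((m : ℝ) ^ 2 - 4) * ((m : ℝ) ^ 2 - 9)) 0 := by
  have h12 := (fac_ap m 1).mul (fac_ap m 2) (fac_cont m 2)
  have h123 := h12.mul (fac_ap m 3) (fac_cont m 3)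
  have h := (((Ap.poly 1 0 0 0 0 0 0 0).add (fac_ap m 1)).add h12).add h123
  have h' : Ap (fun h => 1 + fac m 1 h + fac m 1 h * fac m 2 h
      + fac m 1 h * fac m 2 h * fac m 3 h) 1 0 ((m : ℝ) ^ 2 - 1) 0
    (((m : ℝ) ^ 4 - 1) / 12 + ((m : ℝ) ^ 2 - 1) * ((m : ℝ) ^ 2 - 4)) 0
    (((m : ℝ) ^ 6 - 1) / 360 + (((m : ℝ) ^ 2 - 1) * ((m : ℝ) ^ 4 - 16)
      + ((m : ℝ) ^ 4 - 1) * ((m : ℝ) ^ 2 - 4)) / 12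
      + ((m : ℝ) ^ 2 - 1) * ((m : ℝ) ^ 2 - 4) * ((m : ℝ) ^ 2 - 9)) 0 := by
    simp only [zero_mul, add_zero] at h
    refine Ap.congr h ?_ ?_ ?_ ?_ ?_ ?_ ?_ ?_ <;> push_cast <;> ring
  unfold Ap at h' ⊢
  have hs : (fun h => ∑ k ∈ Finset.range m.natAbs, hprod m (4 + k) h) =O[𝓝 0]
      (fun h : ℝ => h ^ 8) := IsBigO.fun_sum fun k _ => hprod_bigO m k
  refine (h'.add hs).congr_left fun h => ?_
  rw [Jh_split m hm]
  ring

/-- `2 sinh (c h / 2)` -/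
noncomputable def sh (c h : ℝ) : ℝ := Real.exp (c / 2 * h) - Real.exp (-(c / 2) * h)

lemma sh_analytic (c : ℝ) : AnalyticAt ℝ (sh c) 0 := by unfold sh; fun_prop

lemma sh_ap (c : ℝ) : Ap (sh c) 0 c 0 (c ^ 3 / 24) 0 (c ^ 5 / 1920) 0 (c ^ 7 / 322560) := by
  refine Ap.congr ((Ap.exp (c / 2)).sub (Ap.exp (-(c / 2)))) ?_ ?_ ?_ ?_ ?_ ?_ ?_ ?_ <;> ring

/-- the claimed Taylor polynomial -/
noncomputable def Tp (n h : ℝ) : ℝ :=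
  1 + 0 * h + (11 - 11 * n ^ 2) * h ^ 2 + (-88 + 88 * n ^ 2) * h ^ 3
          + (11891 / 12 - 1137 * n ^ 2 + 1753 / 12 * n ^ 4) * h ^ 4
          + (-12826 + 47036 / 3 * n ^ 2 - 8558 / 3 * n ^ 4) * h ^ 5
          + (69672971 / 360 - 991683 / 4 * n ^ 2 + 224545 / 4 * n ^ 4
            - 630551 / 360 * n ^ 6) * h ^ 6 + 0 * h ^ 7

lemma Tp_cont (n : ℝ) : ContinuousAt (Tp n) 0 := by unfold Tp; fun_prop

lemma Tp_ap (n : ℝ) : Ap (Tp n) 1 0 (11 - 11 * n ^ 2) (-88 + 88 * n ^ 2)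
    (11891 / 12 - 1137 * n ^ 2 + 1753 / 12 * n ^ 4)
    (-12826 + 47036 / 3 * n ^ 2 - 8558 / 3 * n ^ 4)
    (69672971 / 360 - 991683 / 4 * n ^ 2 + 224545 / 4 * n ^ 4 - 630551 / 360 * n ^ 6) 0 :=
  Ap.poly _ _ _ _ _ _ _ _

/-- summand of the cabling formula -/
noncomputable def phi (u : ℤ) (h : ℝ) : ℝ :=
  Real.exp (11 / 2 * (u ^ 2 + u) * h) * (sh (2 * u + 1) h * Jh (2 * u + 1) h)

lemma phi_analytic (u : ℤ) : AnalyticAt ℝ (phi u) 0 := by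
  unfold phi
  exact (by fun_prop : AnalyticAt ℝ (fun h : ℝ => Real.exp (11 / 2 * (u ^ 2 + u) * h)) 0).mul
    ((sh_analytic _).mul (Jh_analytic _))

/-- the numerator sum -/
noncomputable def Ssum (N : ℕ) (h : ℝ) : ℝ :=
  ∑ j ∈ Finset.range N, phi (2 * (j : ℤ) - ((N : ℤ) - 1)) h

lemma Ssum_analytic (N : ℕ) : AnalyticAt ℝ (Ssum N) 0 := by
  unfold Ssum
  exact Finset.analyticAt_fun_sum _ fun k _ => phi_analytic _

lemma Ssum_step (N : ℕ) (h : ℝ) :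
    Ssum (N + 2) h = Ssum N h + (phi (N + 1) h + phi (-(N + 1)) h) := by
  unfold Ssum
  rw [Finset.sum_range_succ, Finset.sum_range_succ']
  have e1 : ∀ j : ℕ, (2 * ((j + 1 : ℕ) : ℤ) - (((N + 2 : ℕ) : ℤ) - 1))
      = 2 * (j : ℤ) - ((N : ℤ) - 1) := by intro j; push_cast; ring
  have e2 : (2 * ((N + 1 : ℕ) : ℤ) - (((N + 2 : ℕ) : ℤ) - 1)) = N + 1 := by push_cast; ring
  have e3 : (2 * ((0 : ℕ) : ℤ) - (((N + 2 : ℕ) : ℤ) - 1)) = -(N + 1) := by push_cast; ring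
  rw [e2, e3, Finset.sum_congr rfl fun j _ => by rw [e1 j]]
  ring

lemma sh_neg (c h : ℝ) : sh (-c) h = - sh c h := by
  unfold sh
  rw [show -c / 2 * h = -(c / 2) * h by ring, show -(-c / 2) * h = c / 2 * h by ring]
  ring

lemma fac_neg (m : ℤ) (j : ℕ) (h : ℝ) : fac (-m) j h = fac m j h := by
  unfold fac; push_cast; rw [neg_neg]; ring

lemma Jh_neg (m : ℤ) (h : ℝ) : Jh (-m) h = Jh m h := by
  unfold Jh hprod; simp [fac_neg]

lemma phi_pos (N : ℕ) (h : ℝ) : phi (N + 1) h = Real.exp (11 / 2 * (N * (N + 1)) * h) *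
    (Real.exp (11 * (N + 1) * h) * (sh (2 * N + 3) h * Jh (2 * N + 3) h)) := by
  unfold phi
  rw [← mul_assoc (Real.exp (11 / 2 * (N * (N + 1)) * h)), ← Real.exp_add]
  push_cast
  rw [show (2 : ℤ) * (N + 1) + 1 = 2 * N + 3 by ring,
    show (2 : ℝ) * (N + 1) + 1 = 2 * N + 3 by ring]
  congr 2
  ring

lemma phi_neg (N : ℕ) (h : ℝ) : phi (-(N + 1)) h = - (Real.exp (11 / 2 * (N * (N + 1)) * h) *
    (sh (2 * N + 1) h * Jh (2 * N + 1) h)) := by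
  unfold phi
  push_cast
  rw [show (2 : ℤ) * (-(N + 1)) + 1 = -(2 * N + 1) by ring,
    show (2 : ℝ) * (-(N + 1)) + 1 = -(2 * N + 1) by ring, sh_neg, Jh_neg]
  rw [show (11 : ℝ) / 2 * ((-((N : ℝ) + 1)) ^ 2 + -((N : ℝ) + 1)) * h
    = 11 / 2 * (N * (N + 1)) * h by ring]
  ring

lemma bracket (N : ℕ) : (fun h : ℝ =>
    Real.exp (11 * (N + 1) * h) * (sh (2 * N + 3) h * Jh (2 * N + 3) h)
    - sh (2 * N + 1) h * Jh (2 * N + 1) h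
    - Real.exp (33 / 2 * (N + 1) * h) * (sh (N + 2) h * Tp (N + 2) h)
    + Real.exp (-(11 / 2 * (N + 1)) * h) * (sh N h * Tp N h)) =O[𝓝 0] (fun h : ℝ => h ^ 8) := by
  have j1 := (sh_ap (2 * N + 3)).mul (Jh_ap (2 * N + 3) (by omega)) (Jh_analytic _).continuousAt
  have j2 := (sh_ap (2 * N + 1)).mul (Jh_ap (2 * N + 1) (by omega)) (Jh_analytic _).continuousAt
  have j3 := (sh_ap (N + 2)).mul (Tp_ap (N + 2)) (Tp_cont _)
  have j4 := (sh_ap N).mul (Tp_ap N) (Tp_cont _)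
  have k1 := (Ap.exp (11 * (N + 1))).mul j1
    ((sh_analytic _).continuousAt.mul (Jh_analytic _).continuousAt)
  have k3 := (Ap.exp (33 / 2 * (N + 1))).mul j3 ((sh_analytic _).continuousAt.mul (Tp_cont _))
  have k4 := (Ap.exp (-(11 / 2 * (N + 1)))).mul j4 ((sh_analytic _).continuousAt.mul (Tp_cont _))
  have key := ((k1.sub j2).sub k3).add k4
  push_cast at key
  have key2 := Ap.congr key (b0 := 0) (b1 := 0) (b2 := 0) (b3 := 0) (b4 := 0) (b5 := 0)
    (b6 := 0) (b7 := 0) (by ring) (by ring) (by ring) (by ring) (by ring) (by ring)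
    (by ring) (by ring)
  unfold Ap at key2
  refine key2.congr_left fun h => ?_
  ring

/-- the main expansion, without denominators -/
lemma main_bigO (N : ℕ) : (fun h : ℝ => Ssum N h
    - Real.exp (11 / 2 * ((N : ℝ) ^ 2 - 1) * h) * (sh N h * Tp N h))
    =O[𝓝 0] (fun h : ℝ => h ^ 8) := by
  induction N using Nat.twoStepInduction with
  | zero =>
    refine (isBigO_zero _ _).congr_left fun h => ?_
    simp [Ssum, sh]
  | one =>
    refine (isBigO_zero _ _).congr_left fun h => ?_
    have : Tp 1 h = 1 := by unfold Tp; ring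
    simp [Ssum, phi, Jh, hprod_zero, this]
  | more N ih _ =>
    have hb := bigO_mul_cont (bracket N)
      (g := fun h => Real.exp (11 / 2 * (N * (N + 1)) * h)) (by fun_prop)
    refine (ih.add hb).congr_left fun h => ?_
    rw [Ssum_step, phi_pos, phi_neg]
    push_cast
    have e1 : Real.exp (11 / 2 * ((N + 2 : ℝ) ^ 2 - 1) * h)
        = Real.exp (11 / 2 * (N * (N + 1)) * h) * Real.exp (33 / 2 * (N + 1) * h) := by
      rw [← Real.exp_add]; congr 1; ring
    have e2 : Real.exp (11 / 2 * ((N : ℝ) ^ 2 - 1) * h)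
        = Real.exp (11 / 2 * (N * (N + 1)) * h) * Real.exp (-(11 / 2 * (N + 1)) * h) := by
      rw [← Real.exp_add]; congr 1; ring
    rw [e1, e2]
    ring

lemma sh_ne_zero {c h : ℝ} (hc : c ≠ 0) (hh : h ≠ 0) : sh c h ≠ 0 := by
  unfold sh
  intro h0
  have := Real.exp_injective (sub_eq_zero.mp h0)
  have : c * h = 0 := by linarith
  exact (mul_ne_zero hc hh) this

lemma t_pow (h : ℝ) (k : ℤ) (x : ℝ) (hx : (k : ℝ) = 4 * x) :
    Real.exp (h / 4) ^ k = Real.exp (x * h) := by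
  rw [exp_zpow', hx]; congr 1; ring

lemma sh_t (h : ℝ) (m : ℤ) :
    Real.exp (h / 4) ^ (2 * m) - Real.exp (h / 4) ^ (-(2 * m)) = sh m h := by
  unfold sh
  rw [t_pow h (2 * m) (m / 2) (by push_cast; ring),
    t_pow h (-(2 * m)) (-(m / 2)) (by push_cast; ring)]

lemma JCable_eq (N : ℕ) (hN : N ≠ 0) (h : ℝ) (hh : h ≠ 0) :
    JCable 11 2 N h * (Real.exp (11 / 2 * ((N : ℝ) ^ 2 - 1) * h) * sh N h) = Ssum N h := by
  have hd : Real.exp (h / 4) ^ (2 : ℤ) - Real.exp (h / 4) ^ (-2 : ℤ) = sh 1 h := by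
    have := sh_t h 1
    simpa using this
  have h1 : sh 1 h ≠ 0 := sh_ne_zero one_ne_zero hh
  have h2 : sh N h ≠ 0 := sh_ne_zero (by exact_mod_cast hN) hh
  have hterm : ∀ j : ℕ, Real.exp (h / 4) ^ ((11 : ℤ) * 2 * (2 * (j : ℤ) - ((N : ℤ) - 1)) ^ 2
      + 2 * 11 * (2 * (j : ℤ) - ((N : ℤ) - 1))) *
        Jtilde41 (Real.exp (h / 4)) (2 * (2 * (j : ℤ) - ((N : ℤ) - 1)) + 1)
      = phi (2 * (j : ℤ) - ((N : ℤ) - 1)) h / sh 1 h := by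
    intro j
    generalize (2 * (j : ℤ) - ((N : ℤ) - 1)) = u
    unfold Jtilde41 phi
    rw [hd, sh_t, t_pow h _ (11 / 2 * ((u : ℝ) ^ 2 + u)) (by push_cast; ring),
      t_pow h 4 1 (by norm_num), one_mul, Jh_eq]
    push_cast
    ring
  unfold JCable JtildeCable JtildeU
  rw [hd, sh_t, Int.toNat_natCast, Finset.sum_congr rfl fun j _ => hterm j,
    ← Finset.sum_div, t_pow h _ (-(11 / 2 * ((N : ℝ) ^ 2 - 1))) (by push_cast; ring)]
  rw [show ∑ j ∈ Finset.range N, phi (2 * (j : ℤ) - ((N : ℤ) - 1)) h = Ssum N h from rfl]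
  rw [neg_mul, Real.exp_neg, Int.cast_natCast]
  have h3 := Real.exp_ne_zero (11 / 2 * ((N : ℝ) ^ 2 - 1) * h)
  field_simp

lemma dslope_analytic {f : ℝ → ℝ} (hf : AnalyticAt ℝ f 0) : AnalyticAt ℝ (dslope f 0) 0 := by
  obtain ⟨p, hp⟩ := hf
  exact ⟨_, hp.has_fpower_series_dslope_fslope⟩

lemma dslope_zero_of {f : ℝ → ℝ} (hf : f 0 = 0) {h : ℝ} (hh : h ≠ 0) :
    dslope f 0 h = f h / h := by
  rw [dslope_of_ne _ hh, slope_def_field, hf]; simp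

lemma sh_deriv (c : ℝ) : deriv (sh c) 0 = c := by
  have h1 : HasDerivAt (fun h : ℝ => Real.exp (c / 2 * h)) (c / 2) 0 := by
    have := ((hasDerivAt_id (0 : ℝ)).const_mul (c / 2)).exp
    simpa using this
  have h2 : HasDerivAt (fun h : ℝ => Real.exp (-(c / 2) * h)) (-(c / 2)) 0 := by
    have := ((hasDerivAt_id (0 : ℝ)).const_mul (-(c / 2))).exp
    simpa using this
  have := (h1.sub h2).deriv
  have h3 : sh c = (fun h : ℝ => Real.exp (c / 2 * h)) - fun h : ℝ => Real.exp (-(c / 2) * h) :=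
    rfl
  rw [h3, this]; ring

lemma Ssum_zero (N : ℕ) : Ssum N 0 = 0 := by simp [Ssum, phi, sh]

lemma final (N : ℕ) (hN : N ≠ 0) :
    ∃ g : ℝ → ℝ, AnalyticAt ℝ g 0 ∧
      (∀ᶠ h in nhdsWithin (0 : ℝ) {0}ᶜ, g h = JCable 11 2 N h) ∧
      (fun h : ℝ => g h - Tp N h) =O[𝓝 (0 : ℝ)] (fun h => h ^ 7) := by
  have hNr : (N : ℝ) ≠ 0 := by exact_mod_cast hN
  have hsh0 : sh N 0 = 0 := by simp [sh]
  set D : ℝ → ℝ := fun h => Real.exp (11 / 2 * ((N : ℝ) ^ 2 - 1) * h) * dslope (sh N) 0 h with hD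
  have hDa : AnalyticAt ℝ D 0 :=
    (by fun_prop : AnalyticAt ℝ (fun h : ℝ => Real.exp (11 / 2 * ((N : ℝ) ^ 2 - 1) * h)) 0).mul
      (dslope_analytic (sh_analytic _))
  have hD0 : D 0 ≠ 0 := by simp [hD, dslope_same, sh_deriv, hNr]
  have hSa := dslope_analytic (Ssum_analytic N)
  have hga : AnalyticAt ℝ (fun h => dslope (Ssum N) 0 h / D h) 0 := hSa.div hDa hD0
  have hDh : ∀ h : ℝ, h ≠ 0 →
      D h = Real.exp (11 / 2 * ((N : ℝ) ^ 2 - 1) * h) * sh N h / h := by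
    intro h hh
    rw [hD]; simp only; rw [dslope_zero_of hsh0 hh]; ring
  refine ⟨fun h => dslope (Ssum N) 0 h / D h, hga, ?_, ?_⟩
  · filter_upwards [self_mem_nhdsWithin] with h hh
    have hh : h ≠ 0 := hh
    have h2 : sh N h ≠ 0 := sh_ne_zero hNr hh
    have h3 := Real.exp_ne_zero (11 / 2 * ((N : ℝ) ^ 2 - 1) * h)
    rw [hDh h hh, dslope_zero_of (Ssum_zero N) hh, ← JCable_eq N hN h hh]
    field_simp
  · -- on the punctured neighbourhood
    have hinv : (fun h => (D h)⁻¹) =O[𝓝 0] (fun _ : ℝ => (1 : ℝ)) :=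
      cont_bigO (hDa.inv hD0).continuousAt
    have hm := (main_bigO N).mul hinv
    have hq := (hm.mono (nhdsWithin_le_nhds (s := {0}ᶜ))).mul
      (isBigO_refl (fun h : ℝ => h⁻¹) (𝓝[≠] 0))
    have hp : (fun h : ℝ => dslope (Ssum N) 0 h / D h - Tp N h) =O[𝓝[≠] 0]
        (fun h : ℝ => h ^ 7) := by
      refine hq.congr' ?_ ?_
      · filter_upwards [self_mem_nhdsWithin] with h hh
        have hh : h ≠ 0 := hh
        have h2 : sh N h ≠ 0 := sh_ne_zero hNr hh
        have h3 := Real.exp_ne_zero (11 / 2 * ((N : ℝ) ^ 2 - 1) * h)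
        rw [hDh h hh, dslope_zero_of (Ssum_zero N) hh]
        field_simp
      · filter_upwards [self_mem_nhdsWithin] with h hh
        have hh : h ≠ 0 := hh
        field_simp
    have hc : ContinuousAt (fun h : ℝ => dslope (Ssum N) 0 h / D h - Tp N h) 0 :=
      hga.continuousAt.sub (Tp_cont _)
    have ht : Tendsto (fun h : ℝ => dslope (Ssum N) 0 h / D h - Tp N h) (𝓝[≠] 0) (𝓝 0) := by
      refine hp.trans_tendsto ?_
      have : ContinuousAt (fun h : ℝ => h ^ 7) 0 := by fun_prop
      have h' : Tendsto (fun h : ℝ => h ^ 7) (𝓝 0) (𝓝 0) := by simpa [ContinuousAt] using this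
      exact h'.mono_left nhdsWithin_le_nhds
    have h0 := tendsto_nhds_unique (hc.tendsto.mono_left nhdsWithin_le_nhds) ht
    rw [← nhdsNE_sup_pure, isBigO_sup]
    refine ⟨hp, ?_⟩
    rw [isBigO_pure]
    intro _
    exact h0

/-- For `K = C_{(11,2)}(4₁)` and every integer `n ≥ 1`, the function `ℏ ↦ J_{K,n}(e^ℏ)`
(defined for small `ℏ ≠ 0` by the quotient `J̃_{K,n}(e^{ℏ/4})/J̃_{U,n}(e^{ℏ/4})` and extended
real-analytically across `ℏ = 0`) has Taylor expansion at `ℏ = 0` given by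
`1 + (11 − 11n²)ℏ² + (−88 + 88n²)ℏ³ + (11891/12 − 1137n² + (1753/12)n⁴)ℏ⁴
 + (−12826 + (47036/3)n² − (8558/3)n⁴)ℏ⁵
 + (69672971/360 − (991683/4)n² + (224545/4)n⁴ − (630551/360)n⁶)ℏ⁶ + O(ℏ⁷)`. -/
theorem hbar_expansion_cable_11_2 (n : ℤ) (hn : 1 ≤ n) :
    ∃ g : ℝ → ℝ, AnalyticAt ℝ g 0 ∧
      (∀ᶠ h in nhdsWithin (0 : ℝ) {0}ᶜ, g h = JCable 11 2 n h) ∧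
      (fun h : ℝ => g h -
        (1 + (11 - 11 * (n : ℝ) ^ 2) * h ^ 2 + (-88 + 88 * (n : ℝ) ^ 2) * h ^ 3
          + (11891 / 12 - 1137 * (n : ℝ) ^ 2 + 1753 / 12 * (n : ℝ) ^ 4) * h ^ 4
          + (-12826 + 47036 / 3 * (n : ℝ) ^ 2 - 8558 / 3 * (n : ℝ) ^ 4) * h ^ 5
          + (69672971 / 360 - 991683 / 4 * (n : ℝ) ^ 2 + 224545 / 4 * (n : ℝ) ^ 4
            - 630551 / 360 * (n : ℝ) ^ 6) * h ^ 6))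
        =O[nhds (0 : ℝ)] (fun h => h ^ 7) := by
  obtain ⟨N, rfl⟩ : ∃ N : ℕ, n = N := ⟨n.toNat, by omega⟩
  obtain ⟨g, h1, h2, h3⟩ := final N (by omega)
  refine ⟨g, h1, h2, h3.congr_left fun h => ?_⟩
  unfold Tp
  push_cast
  ring
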